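/- Let R be a regular F-finite domain of prime characteristic p, let 𝔞 be a nonzero ideal of R, and let c be a nonnegative p-rational number (i.e., of the form k/p^n). Then there exists a power q of p such that 𝔞^[c + 1/q] = 𝔞^[c]; consequently 𝔞^[c'] = 𝔞^[c] for all p-rational c' ≥ c sufficiently close to c (right constancy of rational Frobenius powers). -/

import Mathlib

open scoped BigOperators

/-- The `q`-th bracket power of an ideal: the ideal generated by `q`-th powers
of elements of `a`. -/
def bracketPow {R : Type*} [CommRing R] (a : Ideal R) (q : ℕ) : Ideal R :=
  Ideal.span ((fun x => x ^ q) '' (a : Set R))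

/-- The generalized `k`-th Frobenius power of an ideal, defined via the base-`p`
digits of `k`:  `𝔞^[k] = ∏ᵢ (𝔞^[pⁱ])^(kᵢ)` where `kᵢ = k / pⁱ % p` is the `i`-th
base-`p` digit of `k` (digits with index `> k` vanish, so the product below suffices). -/
def frobPow {R : Type*} [CommRing R] (p : ℕ) (a : Ideal R) (k : ℕ) : Ideal R :=
  ∏ i ∈ Finset.range (k + 1), bracketPow a (p ^ i) ^ (k / p ^ i % p)

/-- The `q`-th Frobenius root `𝔠^[1/q]`: the smallest ideal `𝔡` with `𝔠 ⊆ 𝔡^[q]`.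
(Over a regular F-finite domain the infimum below is itself such an ideal, by
flatness of Frobenius, so it is indeed the smallest one.) -/
def frobRoot {R : Type*} [CommRing R] (q : ℕ) (c : Ideal R) : Ideal R :=
  sInf {d : Ideal R | c ≤ bracketPow d q}

/-- The `p`-rational Frobenius power `𝔞^[k/pᵉ] = (𝔞^[k])^[1/pᵉ]`, given in terms of a
representation `k/pᵉ` of a nonnegative `p`-rational number. -/
def pRatPow {R : Type*} [CommRing R] (p : ℕ) (a : Ideal R) (k e : ℕ) : Ideal R :=
  frobRoot (p ^ e) (frobPow p a k)

/-!
The Frobenius root is left adjoint to the bracket power, `𝔠^[1/q] ≤ 𝔡 ↔ 𝔠 ≤ 𝔡^[q]`, and the bracket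
power commutes with colon ideals; together these give `(𝔟^[q] 𝔞)^[1/q] = 𝔟 𝔞^[1/q]`. As
`𝔞^[kq + 1] = (𝔞^[k])^[q] 𝔞` for a power `q > 1` of `p`, it follows that
`𝔞^[c + 1/(pⁿq)] = (𝔞^[k] 𝔞^[1/q])^[1/pⁿ]` for `c = k/pⁿ`, so it is enough that `𝔞^[1/q] = R`
for large `q`. The ascending chain `𝔞^[1/q]` stabilizes at some ideal `𝔦`, and then
`𝔞 ≤ 𝔦^[q] ≤ 𝔦^q` for all large `q`; since `𝔞` contains a nonzerodivisor, `𝔦 = R` by Krull's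
intersection theorem.
-/

section Projective

theorem mem_smul_top_iff_forall_dual {R M : Type*} [CommSemiring R] [AddCommMonoid M] [Module R M]
    [Module.Projective R M] {I : Ideal R} {x : M} :
    x ∈ I • (⊤ : Submodule R M) ↔ ∀ φ : Module.Dual R M, φ x ∈ I := by
  constructor
  · intro hx φ
    have smul_top_le : I • (⊤ : Submodule R M) ≤ Submodule.comap φ I :=
      Submodule.smul_le.mpr fun r hr m _ ↦ by
        simpa only [Submodule.mem_comap, map_smul, smul_eq_mul] using I.mul_mem_right (φ m) hr
    exact smul_top_le hx
  · intro h
    obtain ⟨s, hs⟩ := Module.projective_def.mp ‹Module.Projective R M›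
    rw [← hs x, Finsupp.linearCombination_apply]
    exact Submodule.sum_mem _ fun m _ ↦
      Submodule.smul_mem_smul (h (Finsupp.lapply m ∘ₗ s)) Submodule.mem_top

theorem mem_map_algebraMap_iff_forall_dual {R S : Type*} [CommSemiring R] [CommSemiring S]
    [Algebra R S] [Module.Projective R S] {I : Ideal R} {x : S} :
    x ∈ I.map (algebraMap R S) ↔ ∀ φ : Module.Dual R S, φ x ∈ I := by
  rw [← Submodule.restrictScalars_mem R, ← Ideal.smul_top_eq_map, mem_smul_top_iff_forall_dual]

end Projective

section FiniteFlat

variable {R S : Type*} [CommRing R] [CommRing S] [IsNoetherianRing R] {f : R →+* S}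

theorem map_sInf_of_finite_of_flat (hfin : f.Finite) (hflat : f.Flat) (D : Set (Ideal R)) :
    (sInf D).map f = ⨅ d ∈ D, d.map f := by
  algebraize [f]
  have := Module.finitePresentation_of_finite R S
  have : Module.Projective R S := Module.Flat.projective_of_finitePresentation
  ext x
  change x ∈ (sInf D).map (algebraMap R S) ↔ x ∈ ⨅ d ∈ D, d.map (algebraMap R S)
  simp only [mem_map_algebraMap_iff_forall_dual, Submodule.mem_sInf, Submodule.mem_iInf]
  exact ⟨fun h d hd φ ↦ h φ d hd, fun h φ d hd ↦ h d hd φ⟩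

theorem map_colon_of_finite_of_flat (hfin : f.Finite) (hflat : f.Flat) (I J : Ideal R) :
    (I.colon (J : Set R)).map f = (I.map f).colon (J.map f : Set S) := by
  algebraize [f]
  have := Module.finitePresentation_of_finite R S
  have : Module.Projective R S := Module.Flat.projective_of_finitePresentation
  ext x
  change x ∈ (I.colon (J : Set R)).map (algebraMap R S) ↔
    x ∈ (I.map (algebraMap R S)).colon (Ideal.span (algebraMap R S '' J) : Set S)
  have dual_mul (φ : Module.Dual R S) (b : R) : φ (x * algebraMap R S b) = φ x * b := by
    rw [mul_comm x, ← Algebra.smul_def, map_smul, smul_eq_mul, mul_comm]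
  simp only [Ideal.colon_span, Submodule.mem_colon, Set.forall_mem_image, smul_eq_mul,
    mem_map_algebraMap_iff_forall_dual, dual_mul]
  exact ⟨fun h _ hb φ ↦ h φ _ hb, fun h φ _ hb ↦ h hb φ⟩

end FiniteFlat

theorem le_colon_iff_mul_le {R : Type*} [CommSemiring R] {I J K : Ideal R} :
    J ≤ K.colon (I : Set R) ↔ I * J ≤ K := by
  rw [mul_comm, Ideal.mul_le]
  exact forall₂_congr fun _ _ ↦ Submodule.mem_colon

theorem eq_top_of_mem_nonZeroDivisors_of_forall_mem_pow {R : Type*} [CommRing R]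
    [IsNoetherianRing R] {I : Ideal R} {x : R} (hx : x ∈ nonZeroDivisors R)
    (hxI : ∀ i : ℕ, x ∈ I ^ i) : I = ⊤ := by
  obtain ⟨⟨r, hrI⟩, hrx : r * x = x⟩ :=
    (I.mem_iInf_smul_pow_eq_bot_iff x).mp (by simpa [Submodule.mem_iInf] using hxI)
  have hr : r = 1 := (mul_cancel_right_mem_nonZeroDivisors hx).mp (hrx.trans (one_mul x).symm)
  exact I.eq_top_of_isUnit_mem hrI (hr ▸ isUnit_one)

section BracketPow

variable {R : Type*} [CommRing R]

theorem bracketPow_mono {a b : Ideal R} (h : a ≤ b) (q : ℕ) : bracketPow a q ≤ bracketPow b q :=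
  Ideal.span_mono (Set.image_mono h)

theorem bracketPow_antitone (a : Ideal R) : Antitone (bracketPow a) := by
  intro q q' hq
  refine Ideal.span_le.mpr ?_
  rintro _ ⟨x, hx, rfl⟩
  exact Ideal.mem_of_dvd _ (pow_dvd_pow x hq) (Ideal.subset_span ⟨x, hx, rfl⟩)

theorem bracketPow_le_pow (a : Ideal R) (q : ℕ) : bracketPow a q ≤ a ^ q := by
  refine Ideal.span_le.mpr ?_
  rintro _ ⟨x, hx, rfl⟩
  exact Ideal.pow_mem_pow hx q

theorem bracketPow_one (a : Ideal R) : bracketPow a 1 = a := by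
  simp [bracketPow]

variable (p : ℕ) [ExpChar R p]

theorem bracketPow_eq_map (a : Ideal R) (e : ℕ) :
    bracketPow a (p ^ e) = a.map (iterateFrobenius R p e) := rfl

theorem bracketPow_bracketPow (a : Ideal R) (m n : ℕ) :
    bracketPow (bracketPow a (p ^ m)) (p ^ n) = bracketPow a (p ^ (n + m)) := by
  simp only [bracketPow_eq_map, Ideal.map_map, iterateFrobenius_add]

theorem bracketPow_mul (a b : Ideal R) (e : ℕ) :
    bracketPow (a * b) (p ^ e) = bracketPow a (p ^ e) * bracketPow b (p ^ e) := by
  simp only [bracketPow_eq_map, Ideal.map_mul]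

theorem bracketPow_pow (a : Ideal R) (m e : ℕ) :
    bracketPow (a ^ m) (p ^ e) = bracketPow a (p ^ e) ^ m := by
  simp only [bracketPow_eq_map, Ideal.map_pow]

theorem bracketPow_prod {ι : Type*} (s : Finset ι) (a : ι → Ideal R) (e : ℕ) :
    bracketPow (∏ i ∈ s, a i) (p ^ e) = ∏ i ∈ s, bracketPow (a i) (p ^ e) :=
  map_prod (Ideal.mapHom (iterateFrobenius R p e)) a s

end BracketPow

section FrobPow

theorem mul_pow_add_div_pow_mod {p : ℕ} (hp : 0 < p) (k r : ℕ) {i e : ℕ} (hie : i < e) :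
    (k * p ^ e + r) / p ^ i % p = r / p ^ i % p := by
  obtain ⟨j, rfl⟩ : ∃ j, e = i + j + 1 := Nat.exists_eq_add_of_lt hie
  have h_split : k * p ^ (i + j + 1) + r = p ^ i * (p * (k * p ^ j)) + r := by ring
  rw [h_split, Nat.mul_add_div (by positivity), Nat.mul_add_mod]

variable {R : Type*} [CommRing R] {p : ℕ}

theorem frobPow_eq_prod_range (hp : 1 < p) (a : Ideal R) {k N : ℕ} (hk : k < p ^ N) :
    frobPow p a k = ∏ i ∈ Finset.range N, bracketPow a (p ^ i) ^ (k / p ^ i % p) := by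
  have digit_eq_zero {i : ℕ} (hi : k < p ^ i) : k / p ^ i % p = 0 := by
    rw [Nat.div_eq_of_lt hi, Nat.zero_mod]
  refine Finset.prod_congr_of_eq_on_inter (fun i _ hi ↦ ?_) (fun i _ hi ↦ ?_) fun _ _ _ ↦ rfl
  · have hNi : N ≤ i := by simpa only [Finset.mem_range, not_lt] using hi
    rw [digit_eq_zero (hk.trans_le (Nat.pow_le_pow_right hp.le hNi)), pow_zero]
  · have hki : k < i := by simpa only [Finset.mem_range, not_lt, Nat.add_one_le_iff] using hi
    rw [digit_eq_zero (hki.trans (Nat.lt_pow_self hp)), pow_zero]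

theorem frobPow_of_lt (hp : 1 < p) (a : Ideal R) {r : ℕ} (hr : r < p) : frobPow p a r = a ^ r := by
  rw [frobPow_eq_prod_range hp a (N := 1) (by simpa using hr), Finset.prod_range_one, pow_zero,
    bracketPow_one, Nat.div_one, Nat.mod_eq_of_lt hr]

variable [Fact p.Prime] [CharP R p]

theorem frobPow_mul_pow_add (a : Ideal R) (k : ℕ) {e r : ℕ} (hr : r < p ^ e) :
    frobPow p a (k * p ^ e + r) = bracketPow (frobPow p a k) (p ^ e) * frobPow p a r := by
  have hp : p.Prime := Fact.out
  have hk : k < p ^ k := Nat.lt_pow_self hp.one_lt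
  have hkr : k * p ^ e + r < p ^ (e + k) := by
    rw [pow_add]
    nlinarith
  rw [frobPow_eq_prod_range hp.one_lt a hkr, frobPow_eq_prod_range hp.one_lt a hk,
    frobPow_eq_prod_range hp.one_lt a hr, Finset.prod_range_add, bracketPow_prod, mul_comm]
  congr 1
  · refine Finset.prod_congr rfl fun i _ ↦ ?_
    rw [bracketPow_pow, bracketPow_bracketPow, pow_add, ← Nat.div_div_eq_div_mul,
      mul_comm k, Nat.mul_add_div (pow_pos hp.pos e), Nat.div_eq_of_lt hr, add_zero]
  · refine Finset.prod_congr rfl fun i hi ↦ ?_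
    rw [mul_pow_add_div_pow_mod hp.pos k r (Finset.mem_range.mp hi)]

theorem frobPow_mul_pow (a : Ideal R) (k e : ℕ) :
    frobPow p a (k * p ^ e) = bracketPow (frobPow p a k) (p ^ e) := by
  have hp := (Fact.out : p.Prime).one_lt
  have h := frobPow_mul_pow_add (p := p) a k (e := e) (r := 0) (by positivity)
  rwa [add_zero, frobPow_of_lt hp a (zero_lt_one.trans hp), pow_zero, Ideal.one_eq_top,
    Ideal.mul_top] at h

-- The factor `a` is what makes the induction on `k` survive a carry in base `p`.
theorem frobPow_succ_le (a : Ideal R) (k : ℕ) : frobPow p a (k + 1) ≤ frobPow p a k * a := by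
  have hp := (Fact.out : p.Prime).one_lt
  induction k using Nat.strong_induction_on with
  | _ k ih =>
    obtain ⟨m, r, hr, rfl⟩ : ∃ m r, r < p ∧ k = m * p ^ 1 + r :=
      ⟨k / p, k % p, Nat.mod_lt k (by lia), by rw [pow_one, Nat.div_add_mod']⟩
    rw [frobPow_mul_pow_add a m (by simpa using hr), frobPow_of_lt hp a hr, mul_assoc, ← pow_succ,
      add_assoc]
    rcases (show r + 1 ≤ p from hr).lt_or_eq with no_carry | carry
    · rw [frobPow_mul_pow_add a m (by simpa using no_carry), frobPow_of_lt hp a no_carry]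
    · have hm : m < m * p ^ 1 + r := by
        rw [pow_one]
        nlinarith
      calc frobPow p a (m * p ^ 1 + (r + 1))
          = bracketPow (frobPow p a (m + 1)) (p ^ 1) := by
            rw [← frobPow_mul_pow, carry, add_one_mul, pow_one]
        _ ≤ bracketPow (frobPow p a m * a) (p ^ 1) := bracketPow_mono (ih m hm) _
        _ = bracketPow (frobPow p a m) (p ^ 1) * bracketPow a p := by
            rw [bracketPow_mul, pow_one]
        _ ≤ bracketPow (frobPow p a m) (p ^ 1) * a ^ (r + 1) :=
            Ideal.mul_mono_right (carry ▸ bracketPow_le_pow a _)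

theorem frobPow_antitone (a : Ideal R) : Antitone (frobPow p a) :=
  antitone_nat_of_succ_le fun k ↦ (frobPow_succ_le a k).trans Ideal.mul_le_left

end FrobPow

section FrobRoot

variable {R : Type*} [CommRing R]

theorem frobRoot_mono (q : ℕ) : Monotone (frobRoot q : Ideal R → Ideal R) :=
  fun _ _ h ↦ sInf_le_sInf fun _ hd ↦ h.trans hd

theorem le_frobRoot {q : ℕ} (hq : q ≠ 0) (c : Ideal R) : c ≤ frobRoot q c :=
  le_sInf fun d hd ↦ le_trans hd ((bracketPow_le_pow d q).trans (Ideal.pow_le_self hq))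

theorem frobRoot_top {q : ℕ} (hq : q ≠ 0) : frobRoot q (⊤ : Ideal R) = ⊤ :=
  top_le_iff.mp (le_frobRoot hq ⊤)

theorem frobRoot_monotone_left (c : Ideal R) : Monotone fun q ↦ frobRoot q c :=
  fun _ _ hq ↦ sInf_le_sInf fun d hd ↦ le_trans hd (bracketPow_antitone d hq)

variable {p : ℕ} [ExpChar R p]

theorem finite_iterateFrobenius (hfin : (frobenius R p).Finite) (e : ℕ) :
    (iterateFrobenius R p e).Finite := by
  induction e with
  | zero => exact iterateFrobenius_zero R p ▸ RingHom.Finite.id R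
  | succ e ih => exact iterateFrobenius_add R p e 1 ▸ ih.comp (iterateFrobenius_one R p ▸ hfin)

theorem flat_iterateFrobenius (hflat : (frobenius R p).Flat) (e : ℕ) :
    (iterateFrobenius R p e).Flat := by
  induction e with
  | zero => exact iterateFrobenius_zero R p ▸ RingHom.Flat.id R
  | succ e ih =>
    exact iterateFrobenius_add R p e 1 ▸ RingHom.Flat.comp (iterateFrobenius_one R p ▸ hflat) ih

variable [IsNoetherianRing R] (hfin : (frobenius R p).Finite) (hflat : (frobenius R p).Flat)
include hfin hflat

theorem bracketPow_colon (a b : Ideal R) (e : ℕ) :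
    bracketPow (a.colon (b : Set R)) (p ^ e) =
      (bracketPow a (p ^ e)).colon (bracketPow b (p ^ e) : Set R) :=
  map_colon_of_finite_of_flat (finite_iterateFrobenius hfin e) (flat_iterateFrobenius hflat e) a b

theorem le_bracketPow_frobRoot (c : Ideal R) (e : ℕ) :
    c ≤ bracketPow (frobRoot (p ^ e) c) (p ^ e) := by
  rw [bracketPow_eq_map, frobRoot, map_sInf_of_finite_of_flat
    (finite_iterateFrobenius hfin e) (flat_iterateFrobenius hflat e)]
  exact le_iInf₂ fun _ hd ↦ hd

theorem frobRoot_le_iff {c d : Ideal R} {e : ℕ} :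
    frobRoot (p ^ e) c ≤ d ↔ c ≤ bracketPow d (p ^ e) :=
  ⟨fun h ↦ (le_bracketPow_frobRoot hfin hflat c e).trans (bracketPow_mono h _), fun h ↦ sInf_le h⟩

theorem frobRoot_frobRoot (c : Ideal R) (m n : ℕ) :
    frobRoot (p ^ m) (frobRoot (p ^ n) c) = frobRoot (p ^ (m + n)) c :=
  eq_of_forall_ge_iff fun d ↦ by
    rw [frobRoot_le_iff hfin hflat, frobRoot_le_iff hfin hflat, frobRoot_le_iff hfin hflat,
      bracketPow_bracketPow, add_comm]

theorem frobRoot_bracketPow_mul (a b : Ideal R) (e : ℕ) :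
    frobRoot (p ^ e) (bracketPow b (p ^ e) * a) = b * frobRoot (p ^ e) a :=
  eq_of_forall_ge_iff fun d ↦ by
    rw [frobRoot_le_iff hfin hflat, ← le_colon_iff_mul_le, ← bracketPow_colon hfin hflat,
      ← frobRoot_le_iff hfin hflat, le_colon_iff_mul_le]

theorem frobRoot_bracketPow (b : Ideal R) (e : ℕ) :
    frobRoot (p ^ e) (bracketPow b (p ^ e)) = b := by
  have hp : p ^ e ≠ 0 := pow_ne_zero e (expChar_ne_zero R p)
  rw [← Ideal.mul_top (bracketPow b _), frobRoot_bracketPow_mul hfin hflat, frobRoot_top hp,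
    Ideal.mul_top]

theorem eventually_frobRoot_eq_top (hp : 1 < p) {a : Ideal R} {x : R} (hxa : x ∈ a)
    (hx : x ∈ nonZeroDivisors R) : ∀ᶠ e in Filter.atTop, frobRoot (p ^ e) a = ⊤ := by
  have mono : Monotone fun e ↦ frobRoot (p ^ e) a :=
    (frobRoot_monotone_left a).comp (pow_right_mono₀ hp.le)
  obtain ⟨N, hN⟩ := WellFoundedGT.monotone_chain_condition ⟨_, mono⟩
  have hstab {e : ℕ} (he : N ≤ e) : frobRoot (p ^ e) a = frobRoot (p ^ N) a := (hN e he).symm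
  have le_pow (i : ℕ) : a ≤ frobRoot (p ^ N) a ^ i := by
    let e := max N i
    calc a ≤ bracketPow (frobRoot (p ^ e) a) (p ^ e) := le_bracketPow_frobRoot hfin hflat a e
      _ = bracketPow (frobRoot (p ^ N) a) (p ^ e) := by rw [hstab (le_max_left N i)]
      _ ≤ frobRoot (p ^ N) a ^ (p ^ e) := bracketPow_le_pow _ _
      _ ≤ frobRoot (p ^ N) a ^ i :=
        Ideal.pow_le_pow_right ((le_max_right N i).trans (Nat.lt_pow_self hp).le)
  filter_upwards [Filter.eventually_ge_atTop N] with e he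
  rw [hstab he]
  exact eq_top_of_mem_nonZeroDivisors_of_forall_mem_pow hx fun i ↦ le_pow i hxa

end FrobRoot

section PRatPow

variable {R : Type*} [CommRing R] [IsNoetherianRing R] {p : ℕ} [Fact p.Prime] [CharP R p]
  (hfin : (frobenius R p).Finite) (hflat : (frobenius R p).Flat)
include hfin hflat

theorem pRatPow_mul_pow (a : Ideal R) (k n e : ℕ) :
    pRatPow p a (k * p ^ e) (n + e) = pRatPow p a k n := by
  rw [pRatPow, frobPow_mul_pow, ← frobRoot_frobRoot hfin hflat, frobRoot_bracketPow hfin hflat,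
    pRatPow]

theorem pRatPow_mul_pow_add_one (a : Ideal R) (k n : ℕ) {e : ℕ} (he : e ≠ 0) :
    pRatPow p a (k * p ^ e + 1) (n + e) =
      frobRoot (p ^ n) (frobPow p a k * frobRoot (p ^ e) a) := by
  have hp := (Fact.out : p.Prime).one_lt
  rw [pRatPow, frobPow_mul_pow_add a k (one_lt_pow₀ hp he), frobPow_of_lt hp a hp, pow_one,
    ← frobRoot_frobRoot hfin hflat, frobRoot_bracketPow_mul hfin hflat]

theorem pRatPow_le_pRatPow_of_div_le (a : Ideal R) {k m l n : ℕ}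
    (h : (k : ℚ) / (p : ℚ) ^ m ≤ (l : ℚ) / (p : ℚ) ^ n) :
    pRatPow p a l n ≤ pRatPow p a k m := by
  have hp : (0 : ℚ) < p := mod_cast (Fact.out : p.Prime).pos
  have h_cross : k * p ^ n ≤ l * p ^ m := by
    rw [div_le_div_iff₀ (by positivity) (by positivity)] at h
    exact_mod_cast h
  calc pRatPow p a l n = pRatPow p a (l * p ^ m) (m + n) := by
        rw [add_comm, pRatPow_mul_pow hfin hflat]
    _ ≤ pRatPow p a (k * p ^ n) (m + n) := frobRoot_mono _ (frobPow_antitone a h_cross)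
    _ = pRatPow p a k m := pRatPow_mul_pow hfin hflat a k m n

end PRatPow

theorem stmt_14_general {R : Type*} [CommRing R] [IsNoetherianRing R]
    (p : ℕ) [Fact p.Prime] [CharP R p]
    (hFfin : (frobenius R p).Finite) (hreg : (frobenius R p).Flat)
    {a : Ideal R} {x : R} (hxa : x ∈ a) (hx : x ∈ nonZeroDivisors R) (k n : ℕ) :
    (∃ e : ℕ, pRatPow p a (k * p ^ e + 1) (n + e) = pRatPow p a k n) ∧
      ∃ ε : ℚ, 0 < ε ∧ ∀ k' e' : ℕ,
        (k : ℚ) / (p : ℚ) ^ n ≤ (k' : ℚ) / (p : ℚ) ^ e' →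
        (k' : ℚ) / (p : ℚ) ^ e' ≤ (k : ℚ) / (p : ℚ) ^ n + ε →
        pRatPow p a k' e' = pRatPow p a k n := by
  have hp : p.Prime := Fact.out
  obtain ⟨e, ha_root, he⟩ : ∃ e, frobRoot (p ^ e) a = ⊤ ∧ e ≠ 0 :=
    ((eventually_frobRoot_eq_top hFfin hreg hp.one_lt hxa hx).and
      (Filter.eventually_ne_atTop 0)).exists
  have h_const : pRatPow p a (k * p ^ e + 1) (n + e) = pRatPow p a k n := by
    rw [pRatPow_mul_pow_add_one hFfin hreg a k n he, ha_root, Ideal.mul_top, pRatPow]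
  have hp_pos : (0 : ℚ) < p := mod_cast hp.pos
  have h_add : ((k * p ^ e + 1 : ℕ) : ℚ) / (p : ℚ) ^ (n + e) =
      (k : ℚ) / (p : ℚ) ^ n + 1 / (p : ℚ) ^ (n + e) := by
    push_cast
    field_simp
    ring
  refine ⟨⟨e, h_const⟩, 1 / (p : ℚ) ^ (n + e), by positivity, fun k' e' h_lower h_upper ↦ ?_⟩
  exact le_antisymm (pRatPow_le_pRatPow_of_div_le hFfin hreg a h_lower)
    (h_const ▸ pRatPow_le_pRatPow_of_div_le hFfin hreg a (h_upper.trans_eq h_add.symm))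

/-- right constancy of rational Frobenius powers.  For the
`p`-rational number `c = k/pⁿ`: there is a power `q = p^{n+e}` of `p` with
`𝔞^[c + 1/q] = 𝔞^[c]` (note `c + 1/p^{n+e} = (k·pᵉ + 1)/p^{n+e}`), and consequently
`𝔞^[c'] = 𝔞^[c]` for all `p`-rational `c' ≥ c` sufficiently close to `c`. -/
theorem stmt_14 {R : Type*} [CommRing R] [IsDomain R] [IsNoetherianRing R]
    (p : ℕ) [Fact p.Prime] [CharP R p]
    (hFfin : (frobenius R p).Finite) (hreg : (frobenius R p).Flat)
    (a : Ideal R) (ha : a ≠ ⊥) (k n : ℕ) :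
    (∃ e : ℕ, pRatPow p a (k * p ^ e + 1) (n + e) = pRatPow p a k n) ∧
      ∃ ε : ℚ, 0 < ε ∧ ∀ k' e' : ℕ,
        (k : ℚ) / (p : ℚ) ^ n ≤ (k' : ℚ) / (p : ℚ) ^ e' →
        (k' : ℚ) / (p : ℚ) ^ e' ≤ (k : ℚ) / (p : ℚ) ^ n + ε →
        pRatPow p a k' e' = pRatPow p a k n := by
  obtain ⟨x, hxa, hx⟩ := Submodule.exists_mem_ne_zero_of_ne_bot ha
  exact stmt_14_general p hFfin hreg hxa (mem_nonZeroDivisors_of_ne_zero hx) k n
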